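/- Let X be a random variable taking values in a finite set, let E be a finite index set, and for each e ∈ E let m_e be a positive integer, let g_e be a function from the range of X to ZMod m_e, and let K_e be uniformly distributed on ZMod m_e, with the family (K_e)_{e ∈ E} mutually independent and independent of X. Define Y_e := K_e + g_e(X) (addition in ZMod m_e). Then for every function h of X and every subset B ⊆ E: H(h(X) | (Y_e)_{e ∈ E}, (K_e)_{e ∈ B}) = H(h(X) | (g_e(X))_{e ∈ B}), and consequently I(h(X); (Y_e)_{e ∈ E}, (K_e)_{e ∈ B}) = I(h(X); (g_e(X))_{e ∈ B}). -/

import Mathlib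

/-!
A uniform key `k`, independent of `X`, stays uniform and independent of `X` when it is shifted by
`f X`. An eavesdropper who sees the pad `k + f X` and a homomorphic image `r k` of the key knows
exactly as much as one who sees `r (f X)` and the pad, since `r (k + f X) = r k + r (f X)`. The pad
is independent of everything computed from `X`, so given `r (f X)` it reveals nothing more. For the
theorem, `k` is the tuple of all keys and `r` restricts a tuple to `B`.
-/

/-- `nml2 x = -x * log₂ x`, the summand of base-2 Shannon entropy
(with the convention `0 · log 0 = 0`). -/
noncomputable def nml2 (x : ℝ) : ℝ := -x * Real.logb 2 x

open Classical in
/-- Base-2 Shannon entropy of the random variable `X` defined on the finite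
probability space `Ω` with probability mass function `p`. -/
noncomputable def entropy {Ω S : Type*} [Fintype Ω] [Fintype S]
    (p : Ω → ℝ) (X : Ω → S) : ℝ :=
  ∑ s : S, nml2 (∑ ω : Ω, if X ω = s then p ω else 0)

/-- Conditional Shannon entropy `H(X | Y)` (base 2). -/
noncomputable def condEntropy {Ω S T : Type*} [Fintype Ω] [Fintype S] [Fintype T]
    (p : Ω → ℝ) (X : Ω → S) (Y : Ω → T) : ℝ :=
  entropy p (fun ω => (X ω, Y ω)) - entropy p Y

/-- Mutual information `I(X; Y)` (base 2). -/
noncomputable def mutualInfo {Ω S T : Type*} [Fintype Ω] [Fintype S] [Fintype T]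
    (p : Ω → ℝ) (X : Ω → S) (Y : Ω → T) : ℝ :=
  entropy p X + entropy p Y - entropy p (fun ω => (X ω, Y ω))

/-- Conditional mutual information `I(X; Y | Z)` (base 2). -/
noncomputable def condMutualInfo {Ω S T W : Type*} [Fintype Ω] [Fintype S] [Fintype T]
    [Fintype W] (p : Ω → ℝ) (X : Ω → S) (Y : Ω → T) (Z : Ω → W) : ℝ :=
  entropy p (fun ω => (X ω, Z ω)) + entropy p (fun ω => (Y ω, Z ω))
    - entropy p (fun ω => ((X ω, Y ω), Z ω)) - entropy p Z

open Classical in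
/-- The mass function `s ↦ ℙ(X = s)` of the random variable `X`, where `p` gives the masses of the
outcomes; their total need not be `1`. -/
noncomputable def law {Ω S : Type*} [Fintype Ω] (p : Ω → ℝ) (X : Ω → S) (s : S) : ℝ :=
  ∑ ω : Ω, if X ω = s then p ω else 0

/-- `Y` is uniformly distributed on `K` and independent of `U`. Both properties are expressed at
once by `ℙ(U = s, Y = y) = ℙ(U = s) / |K|`. -/
def IsUniformIndep {Ω S K : Type*} [Fintype Ω] [Fintype K]
    (p : Ω → ℝ) (U : Ω → S) (Y : Ω → K) : Prop :=
  ∀ s y, law p (fun ω => (U ω, Y ω)) (s, y) = law p U s / Fintype.card K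

section Law

variable {Ω S T K : Type*} [Fintype Ω] (p : Ω → ℝ) (X : Ω → S)

theorem sum_law [Fintype S] : ∑ s, law p X s = ∑ ω, p ω := by
  classical
  unfold law
  rw [Finset.sum_comm]
  simp

open Classical in
theorem law_comp (φ : S → T) (t : T) :
    law p (fun ω => φ (X ω)) t
      = ∑ s ∈ Finset.univ.image X, if φ s = t then law p X s else 0 := by
  calc law p (fun ω => φ (X ω)) t
      = ∑ ω, ∑ s ∈ Finset.univ.image X, if X ω = s then (if φ s = t then p ω else 0) else 0 := by
        simp [law]
    _ = ∑ s ∈ Finset.univ.image X, ∑ ω, if φ s = t then (if X ω = s then p ω else 0) else 0 := by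
        rw [Finset.sum_comm]
        simp only [← ite_and, and_comm]
    _ = ∑ s ∈ Finset.univ.image X, if φ s = t then law p X s else 0 := by
        simp only [law, Finset.sum_ite_irrel, Finset.sum_const_zero]

open Classical in
theorem law_prodMk (Y : Ω → K) (s : S) (y : K) :
    law p (fun ω => (X ω, Y ω)) (s, y) = law (fun ω => if Y ω = y then p ω else 0) X s := by
  simp only [law, Prod.mk.injEq, ite_and]

end Law

section Entropy

variable {Ω S T T' : Type*} [Fintype Ω] [Fintype S] [Fintype T] [Fintype T']

theorem entropy_comp_of_injective (p : Ω → ℝ) (X : Ω → S) {φ : S → T}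
    (hφ : Function.Injective φ) : entropy p (fun ω => φ (X ω)) = entropy p X := by
  classical
  refine (Fintype.sum_of_injective φ hφ _ _ (fun t ht => ?_) fun s => ?_).symm
  · have hne (ω : Ω) : φ (X ω) ≠ t := fun h => ht ⟨X ω, h⟩
    simp [hne, nml2]
  · exact congrArg nml2 (Finset.sum_congr rfl fun ω _ => if_congr hφ.eq_iff.symm rfl rfl)

theorem condEntropy_comp_of_injective (p : Ω → ℝ) (X : Ω → S) (Y : Ω → T) {φ : T → T'}
    (hφ : Function.Injective φ) :
    condEntropy p X (fun ω => φ (Y ω)) = condEntropy p X Y :=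
  congrArg₂ (· - ·)
    (entropy_comp_of_injective p (fun ω => (X ω, Y ω)) (Function.injective_id.prodMap hφ))
    (entropy_comp_of_injective p Y hφ)

theorem mutualInfo_eq_entropy_sub_condEntropy (p : Ω → ℝ) (X : Ω → S) (Y : Ω → T) :
    mutualInfo p X Y = entropy p X - condEntropy p X Y := by
  unfold mutualInfo condEntropy
  ring

end Entropy

theorem mul_nml2_div (x : ℝ) {c : ℝ} (hc : c ≠ 0) :
    c * nml2 (x / c) = nml2 x + x * Real.logb 2 c := by
  unfold nml2
  rcases eq_or_ne x 0 with rfl | hx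
  · simp
  · rw [Real.logb_div hx hc]
    field_simp
    ring

theorem isUniformIndep_fst_snd {A K : Type*} [Fintype A] [Fintype K] (w : A → ℝ) :
    IsUniformIndep (fun ω : A × K => w ω.1) Prod.fst Prod.snd := by
  classical
  intro a y
  have : Nonempty K := ⟨y⟩
  have hjoint : law (fun ω : A × K => w ω.1) (fun ω => (ω.1, ω.2)) (a, y) = w a := by
    simp [law]
  have hfst : law (fun ω : A × K => w ω.1) Prod.fst a = Fintype.card K * w a := by
    simp [law, Fintype.sum_prod_type]
  rw [hjoint, hfst, mul_div_cancel_left₀ _ (Nat.cast_ne_zero.mpr Fintype.card_ne_zero)]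

namespace IsUniformIndep

variable {Ω S T K : Type*} [Fintype Ω] [Fintype K] {p : Ω → ℝ} {U : Ω → S} {Y : Ω → K}

theorem comp (hY : IsUniformIndep p U Y) (φ : S → T) :
    IsUniformIndep p (fun ω => φ (U ω)) Y := by
  classical
  intro t y
  calc law p (fun ω => (φ (U ω), Y ω)) (t, y)
      = ∑ s ∈ Finset.univ.image U, if φ s = t then law p (fun ω => (U ω, Y ω)) (s, y) else 0 := by
        simp only [law_prodMk, law_comp]
    _ = (∑ s ∈ Finset.univ.image U, if φ s = t then law p U s else 0) / Fintype.card K := by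
        simp only [hY _ y, Finset.sum_div, ite_div, zero_div]
    _ = law p (fun ω => φ (U ω)) t / Fintype.card K := by rw [law_comp p U]

theorem add_comp [AddGroup K] (hY : IsUniformIndep p U Y) (f : S → K) :
    IsUniformIndep p U (fun ω => Y ω + f (U ω)) := by
  intro s y
  have hshift (ω : Ω) :
      (U ω, Y ω + f (U ω)) = (s, y) ↔ (U ω, Y ω) = (s, y - f s) := by
    simp only [Prod.mk.injEq, eq_sub_iff_add_eq]
    exact and_congr_right fun hs => by rw [hs]
  rw [← hY s (y - f s)]
  exact Finset.sum_congr rfl fun ω _ => by rw [hshift ω]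

theorem entropy_prodMk [Fintype S] [Nonempty K] (hY : IsUniformIndep p U Y) :
    entropy p (fun ω => (U ω, Y ω))
      = entropy p U + (∑ ω, p ω) * Real.logb 2 (Fintype.card K) := by
  have hK : (Fintype.card K : ℝ) ≠ 0 := Nat.cast_ne_zero.mpr Fintype.card_ne_zero
  calc entropy p (fun ω => (U ω, Y ω))
      = ∑ s, ∑ y, nml2 (law p (fun ω => (U ω, Y ω)) (s, y)) := Fintype.sum_prod_type _
    _ = ∑ s, Fintype.card K * nml2 (law p U s / Fintype.card K) := by
        simp only [hY _ _, Finset.sum_const, Finset.card_univ, nsmul_eq_mul]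
    _ = ∑ s, nml2 (law p U s) + (∑ s, law p U s) * Real.logb 2 (Fintype.card K) := by
        simp only [mul_nml2_div _ hK, Finset.sum_add_distrib, Finset.sum_mul]
    _ = entropy p U + (∑ ω, p ω) * Real.logb 2 (Fintype.card K) := by
        rw [sum_law]
        rfl

theorem condEntropy_prodMk [Fintype S] [Fintype T] [Nonempty K] {X : Ω → S} {Z : Ω → T}
    (hY : IsUniformIndep p (fun ω => (X ω, Z ω)) Y) :
    condEntropy p X (fun ω => (Z ω, Y ω)) = condEntropy p X Z := by
  have hassoc : entropy p (fun ω => (X ω, (Z ω, Y ω))) = entropy p (fun ω => ((X ω, Z ω), Y ω)) :=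
    entropy_comp_of_injective p (fun ω => ((X ω, Z ω), Y ω)) (Equiv.prodAssoc S T K).injective
  unfold condEntropy
  rw [hassoc, hY.entropy_prodMk, (hY.comp Prod.snd).entropy_prodMk, add_sub_add_right_eq_sub]

end IsUniformIndep

theorem stmt5_general {Ω A K L T : Type*} [Fintype Ω] [Fintype K] [Fintype L] [Fintype T]
    [AddGroup K] [AddGroup L] (p : Ω → NNReal) {X : Ω → A} {k : Ω → K}
    (hk : IsUniformIndep (fun ω => (p ω : ℝ)) X k) (f : A → K) (r : K →+ L) (h : A → T) :
    condEntropy (fun ω => (p ω : ℝ)) (fun ω => h (X ω)) (fun ω => (k ω + f (X ω), r (k ω)))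
      = condEntropy (fun ω => (p ω : ℝ)) (fun ω => h (X ω)) (fun ω => r (f (X ω)))
    ∧ mutualInfo (fun ω => (p ω : ℝ)) (fun ω => h (X ω)) (fun ω => (k ω + f (X ω), r (k ω)))
      = mutualInfo (fun ω => (p ω : ℝ)) (fun ω => h (X ω)) (fun ω => r (f (X ω))) := by
  let view : L × K → K × L := fun v => (v.2, r v.2 - v.1)
  have view_injective : Function.Injective view := by
    rintro ⟨l, y⟩ ⟨l', y'⟩ hv
    obtain ⟨rfl, hl⟩ : y = y' ∧ r y - l = r y' - l' := Prod.mk.inj hv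
    rw [sub_right_injective hl]
  have view_pad (ω : Ω) :
      (k ω + f (X ω), r (k ω)) = view (r (f (X ω)), k ω + f (X ω)) := by
    simp only [view, map_add, add_sub_cancel_right]
  have pad_uniform := (hk.add_comp f).comp fun a => (h a, r (f a))
  have hcond : condEntropy (fun ω => (p ω : ℝ)) (fun ω => h (X ω))
        (fun ω => (k ω + f (X ω), r (k ω)))
      = condEntropy (fun ω => (p ω : ℝ)) (fun ω => h (X ω)) (fun ω => r (f (X ω))) := by
    simp only [view_pad]
    rw [condEntropy_comp_of_injective _ _ _ view_injective, pad_uniform.condEntropy_prodMk]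
  exact ⟨hcond, by simp only [mutualInfo_eq_entropy_sub_condEntropy, hcond]⟩

/- Security argument of Part 1 of Theorem 2: with `X ~ p` on `SX`, and keys
`K e` uniform on `ZMod (m e)`, mutually independent and independent of `X`
(realised by the product pmf `q` on `SX × Π e, ZMod (m e)`), setting
`Y e = K e + g e X`, for every `h` and every `B ⊆ E`:
`H(h(X) | (Y_e)_{e ∈ E}, (K_e)_{e ∈ B}) = H(h(X) | (g_e(X))_{e ∈ B})` and
`I(h(X); (Y_e)_{e ∈ E}, (K_e)_{e ∈ B}) = I(h(X); (g_e(X))_{e ∈ B})`. -/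
theorem stmt5 {SX : Type*} [Fintype SX]
    (p : SX → ℝ) (hp0 : ∀ x, 0 ≤ p x) (hp1 : ∑ x : SX, p x = 1)
    {E : Type*} [Fintype E] [DecidableEq E]
    (m : E → ℕ) [∀ e, NeZero (m e)] (hm : ∀ e, 0 < m e)
    (g : (e : E) → SX → ZMod (m e))
    {T : Type*} [Fintype T] (h : SX → T)
    (B : Finset E)
    (q : SX × ((e : E) → ZMod (m e)) → ℝ)
    (hq : q = fun ω => p ω.1 * ∏ e : E, ((1 : ℝ) / (m e : ℝ))) :
    condEntropy q (fun ω => h ω.1)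
        (fun ω => ((fun e : E => ω.2 e + g e ω.1),
          (fun e : {x // x ∈ B} => ω.2 e.1)))
      = condEntropy q (fun ω => h ω.1)
          (fun ω => (fun e : {x // x ∈ B} => g e.1 ω.1))
    ∧ mutualInfo q (fun ω => h ω.1)
        (fun ω => ((fun e : E => ω.2 e + g e ω.1),
          (fun e : {x // x ∈ B} => ω.2 e.1)))
      = mutualInfo q (fun ω => h ω.1)
          (fun ω => (fun e : {x // x ∈ B} => g e.1 ω.1)) := by
  lift q to SX × ((e : E) → ZMod (m e)) → NNReal using fun ω => by
    rw [hq]; exact mul_nonneg (hp0 ω.1) (by positivity)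
  exact stmt5_general q (hq ▸ isUniformIndep_fst_snd fun x => p x * ∏ e, 1 / (m e : ℝ))
    (fun x e => g e x) (AddMonoidHom.pi fun e : {x // x ∈ B} => Pi.evalAddMonoidHom _ e.1) h
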